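/- Central limit theorem in the critical regime for the Type-I ERW (one-dimensional marginal): if p = p_c^m = (m+1)/(2m), then (S_{2n} − 2n·ū)/√(n·log n) converges in distribution, as n → ∞, to the centered multivariate Gaussian distribution on ℝ^d with covariance matrix 2·Σ(U). -/

import Mathlib

/-!
By the Cramér–Wold device and Lévy's continuity theorem it suffices to study, for a fixed vector
`l`, the centred additive functional `S_n = ∑_{k ≤ n} f (ξ_k)` with `f i = ⟨l, u_i - ū⟩`. Put
`σ² = (1/m) ∑ f_i²`; the limit to reach has characteristic function `exp (-σ²)` at `l`.

At `p = (m+1)/(2m)` the memory mechanism says that, for every `g`, the conditional mean of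
`g (ξ_{n+1})` given the past is half the empirical mean of `g` plus half its uniform mean
(`integral_mul_next`). With `g = f` this makes `S_n / √n` a martingale up to a drift of relative
size `n^{-2}`. With `g = f²` it makes the conditional variance of its increment `σ²/(n+1)` up to a
fluctuation driven by the centred functional of `f² - σ²`, which is controlled in `L²`
(`integral_stepSum_sq_le`).

A second order Taylor expansion then gives, for the characteristic function `φ_n(t)` of
`S_n / √n`, the recursion `φ_{n+1}(t) = (1 - t² σ² / (2(n+1))) φ_n(t) + O(|t| n^{-5/4})`
(`stepChar_succ`). As the errors are summable,
`φ_n(t) = exp (-t² σ² (H_n - 1) / 2) + O(|t|)` uniformly in `n`, where `H_n` is the harmonic number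
(`exists_norm_stepChar_sub_le`). Evaluating at time `2n` and `t = √(2 / log n)`, which turns
`S_{2n} / √(2n)` into `S_{2n} / √(n log n)`, the error vanishes and `H_{2n} / log n → 1` yields
`exp (-σ²)` (`tendsto_integral_exp_stepSum`).
-/

open MeasureTheory ProbabilityTheory Filter Finset Topology Matrix

noncomputable section

/-- The σ-algebra generated by the steps `ξ 1, …, ξ n` of the walk. -/
def stepFiltration {Ω : Type*} [MeasurableSpace Ω] {m : ℕ} (ξ : ℕ → Ω → Fin m) (n : ℕ) :
    MeasurableSpace Ω :=
  ⨆ k ∈ Finset.Icc 1 n, MeasurableSpace.comap (ξ k) ⊤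

/-- A Type-I elephant random walk with memory parameter `p`, `m` step directions
and deterministic first step `i0`: `ξ n` is the index of the `n`-th step (for `n ≥ 1`). -/
structure IsTypeIERW {Ω : Type*} [MeasurableSpace Ω] (μ : Measure Ω)
    (m : ℕ) (p : ℝ) (i0 : Fin m) (ξ : ℕ → Ω → Fin m) : Prop where
  measurable : ∀ n, Measurable (ξ n)
  first_step : ∀ᵐ ω ∂μ, ξ 1 ω = i0
  cond : ∀ n : ℕ, 1 ≤ n → ∀ j : Fin m,
    (μ[(fun ω => if ξ (n + 1) ω = j then (1 : ℝ) else 0) | stepFiltration ξ n]) =ᵐ[μ]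
      (fun ω => (1 / (n : ℝ)) * ∑ k ∈ Finset.Icc 1 n,
        (p * (if ξ k ω = j then (1 : ℝ) else 0)
          + ((1 - p) / ((m : ℝ) - 1)) * (if ξ k ω = j then (0 : ℝ) else 1)))


/-- `ν` is the centered (multivariate) Gaussian distribution on `ℝ^d` with covariance
matrix `S`: equivalently, every linear functional `x ↦ ⟨l, x⟩` pushes `ν` forward to a
real centered Gaussian with variance `⟨l, S l⟩`. -/
def IsCenteredGaussianCov {d : ℕ} (ν : Measure (Fin d → ℝ))
    (S : Matrix (Fin d) (Fin d) ℝ) : Prop :=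
  IsProbabilityMeasure ν ∧ ∀ l : Fin d → ℝ,
    ν.map (fun x => l ⬝ᵥ x) =
      ProbabilityTheory.gaussianReal 0 (Real.toNNReal (l ⬝ᵥ S.mulVec l))

/-! ### Additive functionals of the walk and the memory mechanism -/

/-- The additive functional `∑_{k=1}^n f (ξ_k)` of the walk. -/
def stepSum {Ω : Type*} {m : ℕ} (ξ : ℕ → Ω → Fin m) (f : Fin m → ℝ) (n : ℕ) (ω : Ω) : ℝ :=
  ∑ k ∈ Finset.Icc 1 n, f (ξ k ω)

lemma stepSum_succ {Ω : Type*} {m : ℕ} (ξ : ℕ → Ω → Fin m) (f : Fin m → ℝ) (n : ℕ) (ω : Ω) :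
    stepSum ξ f (n + 1) ω = stepSum ξ f n ω + f (ξ (n + 1) ω) := by
  simp [stepSum, Finset.sum_Icc_succ_top]

lemma abs_stepSum_le {Ω : Type*} {m : ℕ} (ξ : ℕ → Ω → Fin m) {f : Fin m → ℝ} {K : ℝ}
    (hK : ∀ i, |f i| ≤ K) (n : ℕ) (ω : Ω) : |stepSum ξ f n ω| ≤ n * K := by
  refine (Finset.abs_sum_le_sum_abs _ _).trans ?_
  refine (Finset.sum_le_sum fun k _ => hK (ξ k ω)).trans ?_
  simp

section
variable {Ω : Type*} [MeasurableSpace Ω] {μ : Measure Ω}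

lemma stepFiltration_le {m : ℕ} {ξ : ℕ → Ω → Fin m} (hξ : ∀ n, Measurable (ξ n)) (n : ℕ) :
    stepFiltration ξ n ≤ ‹MeasurableSpace Ω› :=
  iSup₂_le fun k _ => (hξ k).comap_le

lemma measurable_stepSum_stepFiltration {m : ℕ} (ξ : ℕ → Ω → Fin m) (f : Fin m → ℝ) (n : ℕ) :
    Measurable[stepFiltration ξ n] (stepSum ξ f n) := by
  refine Finset.measurable_fun_sum _ fun k hk => ?_
  have h1 : Measurable[MeasurableSpace.comap (ξ k) ⊤] (fun ω => f (ξ k ω)) :=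
    (measurable_from_top (f := f)).comp (comap_measurable (ξ k))
  exact h1.mono (le_iSup₂_of_le k hk le_rfl) le_rfl

lemma measurable_stepSum {m : ℕ} {ξ : ℕ → Ω → Fin m} (hξ : ∀ n, Measurable (ξ n))
    (f : Fin m → ℝ) (n : ℕ) : Measurable (stepSum ξ f n) :=
  (measurable_stepSum_stepFiltration ξ f n).mono (stepFiltration_le hξ n) le_rfl

/-- The reinforcement mechanism at criticality, in integrated form. Since
`p - (1-p)/(m-1) = 1/2` and `(1-p)/(m-1) = 1/(2m)`, the conditional mean of `f (ξ_{n+1})` is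
half the empirical mean of `f` over the past plus half the uniform mean of `f`. -/
lemma integral_mul_next [IsProbabilityMeasure μ] {m : ℕ} (hm : 2 ≤ m) {p : ℝ}
    (hp : p = ((m : ℝ) + 1) / (2 * m)) {i0 : Fin m} {ξ : ℕ → Ω → Fin m}
    (hERW : IsTypeIERW μ m p i0 ξ) (f : Fin m → ℝ) {n : ℕ} (hn : 1 ≤ n) {G : Ω → ℂ}
    (hG : Measurable[stepFiltration ξ n] G) {C : ℝ} (hC : ∀ ω, ‖G ω‖ ≤ C) :
    ∫ ω, G ω * (f (ξ (n + 1) ω) : ℂ) ∂μ =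
      ∫ ω, G ω * ((stepSum ξ f n ω / (2 * n) + (∑ i, f i) / (2 * m) : ℝ) : ℂ) ∂μ := by
  have hle := stepFiltration_le hERW.measurable n
  have hG' : Measurable G := hG.mono hle le_rfl
  have hm0 : (0 : ℝ) < m := by positivity
  have hm1 : (0 : ℝ) < (m : ℝ) - 1 := by
    have : (2 : ℝ) ≤ m := by exact_mod_cast hm
    linarith
  have hn0 : (0 : ℝ) < n := by exact_mod_cast hn
  have hGi : Integrable G μ := Integrable.of_bound hG'.aestronglyMeasurable C (ae_of_all _ hC)
  have hind : ∀ (k : ℕ) (j : Fin m), Measurable fun ω => if ξ k ω = j then (1 : ℝ) else 0 :=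
    fun k j => (measurable_from_top (f := fun i : Fin m => if i = j then (1 : ℝ) else 0)).comp
      (hERW.measurable k)
  have hgi : ∀ (k : ℕ) (j : Fin m), Integrable (fun ω => if ξ k ω = j then (1 : ℝ) else 0) μ :=
    fun k j => Integrable.of_bound (hind k j).aestronglyMeasurable 1
      (ae_of_all _ fun ω => by split_ifs <;> simp)
  have hprod : ∀ (k : ℕ) (j : Fin m),
      Integrable (fun ω => (if ξ k ω = j then (1 : ℝ) else 0) • G ω) μ :=
    fun k j => hGi.bdd_smul 1 (hind k j).aestronglyMeasurable
      (ae_of_all _ fun ω => by split_ifs <;> simp)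
  set e : Fin m → Ω → ℝ := fun j ω => (1 / (n : ℝ)) * ∑ k ∈ Finset.Icc 1 n,
        (p * (if ξ k ω = j then (1 : ℝ) else 0)
          + ((1 - p) / ((m : ℝ) - 1)) * (if ξ k ω = j then (0 : ℝ) else 1)) with he
  have hstep : ∀ j : Fin m, ∫ ω, (if ξ (n + 1) ω = j then (1 : ℝ) else 0) • G ω ∂μ =
      ∫ ω, e j ω • G ω ∂μ := by
    intro j
    have h1 := condExp_bilin_of_stronglyMeasurable_left (μ := μ) (m := stepFiltration ξ n)
      (ContinuousLinearMap.lsmul ℝ ℝ (E := ℂ)).flip (f := G)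
      (g := fun ω => if ξ (n + 1) ω = j then (1 : ℝ) else 0) hG.stronglyMeasurable
      (hprod (n + 1) j) (hgi (n + 1) j)
    simp only [ContinuousLinearMap.flip_apply, ContinuousLinearMap.lsmul_apply] at h1
    rw [← integral_condExp hle, integral_congr_ae h1]
    refine integral_congr_ae ?_
    filter_upwards [hERW.cond n hn j] with ω hω
    rw [hω]
  have hei : ∀ j, Integrable (fun ω => e j ω • G ω) μ := by
    intro j
    have : (fun ω => e j ω • G ω) = fun ω => (1 / (n : ℝ)) • ∑ k ∈ Finset.Icc 1 n,
        ((p - (1 - p) / ((m : ℝ) - 1)) • ((if ξ k ω = j then (1 : ℝ) else 0) • G ω)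
          + ((1 - p) / ((m : ℝ) - 1)) • G ω) := by
      funext ω
      simp only [he, mul_smul, Finset.sum_smul]
      congr 1
      refine Finset.sum_congr rfl fun k _ => ?_
      split_ifs
      · simp
        ring
      · simp
    rw [this]
    refine Integrable.fun_smul (1 / (n : ℝ)) (integrable_finsetSum _ fun k _ => ?_)
    exact ((hprod k j).fun_smul (p - (1 - p) / ((m : ℝ) - 1))).add
      (hGi.fun_smul ((1 - p) / ((m : ℝ) - 1)))
  have hL : (fun ω => G ω * (f (ξ (n + 1) ω) : ℂ)) =
      fun ω => ∑ j, f j • ((if ξ (n + 1) ω = j then (1 : ℝ) else 0) • G ω) := by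
    funext ω
    simp [ite_smul, mul_comm]
  have hR : (fun ω => G ω * ((stepSum ξ f n ω / (2 * n) + (∑ i, f i) / (2 * m) : ℝ) : ℂ)) =
      fun ω => ∑ j, f j • (e j ω • G ω) := by
    funext ω
    simp only [← mul_smul, ← Finset.sum_smul]
    rw [mul_comm, ← Complex.real_smul]
    congr 1
    have hq : (1 - p) / ((m : ℝ) - 1) = 1 / (2 * m) := by rw [hp]; field_simp; ring
    have hterm : ∀ i j : Fin m, p * (if i = j then (1 : ℝ) else 0)
        + ((1 - p) / ((m : ℝ) - 1)) * (if i = j then (0 : ℝ) else 1) =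
        1 / 2 * (if i = j then 1 else 0) + 1 / (2 * m) := by
      intro i j
      rw [hq, hp]
      split_ifs <;> field_simp <;> ring
    simp only [he, hterm, Finset.sum_add_distrib, ← Finset.mul_sum, mul_add, Finset.sum_const,
      Nat.card_Icc, Nat.add_sub_cancel, nsmul_eq_mul]
    congr 1
    · simp only [← mul_assoc, Finset.mul_sum, stepSum, Finset.sum_div]
      rw [Finset.sum_comm]
      refine Finset.sum_congr rfl fun k _ => ?_
      simp
      field_simp
    · rw [← Finset.sum_mul]
      field_simp
  rw [hL, hR, integral_finsetSum _ fun j _ => (hprod (n + 1) j).fun_smul (f j),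
    integral_finsetSum _ fun j _ => (hei j).fun_smul (f j)]
  refine Finset.sum_congr rfl fun j _ => ?_
  rw [integral_smul, integral_smul, hstep j]

/-! ### Second moments -/

lemma memLp_top_stepSum {m : ℕ} {ξ : ℕ → Ω → Fin m} (hξ : ∀ n, Measurable (ξ n))
    (f : Fin m → ℝ) (n : ℕ) : MemLp (stepSum ξ f n) ⊤ μ := by
  refine memLp_top_of_bound (measurable_stepSum hξ f n).aestronglyMeasurable
    (n * ∑ i, |f i|) (ae_of_all _ fun ω => ?_)
  exact abs_stepSum_le ξ (fun i => Finset.single_le_sum (f := fun i => |f i|)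
    (fun j _ => abs_nonneg _) (Finset.mem_univ i)) n ω

lemma memLp_top_step {m : ℕ} {ξ : ℕ → Ω → Fin m} (hξ : ∀ n, Measurable (ξ n))
    (f : Fin m → ℝ) (n : ℕ) : MemLp (fun ω => f (ξ n ω)) ⊤ μ := by
  refine memLp_top_of_bound
    ((measurable_from_top (f := f)).comp (hξ n)).aestronglyMeasurable
    (∑ i, |f i|) (ae_of_all _ fun ω => ?_)
  exact Finset.single_le_sum (f := fun i => |f i|) (fun j _ => abs_nonneg _)
    (Finset.mem_univ (ξ n ω))

/-- Second moment bound. Writing `s_n` for the second moment of a centred additive functional,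
`s_{n+1} ≤ (1 + 1/n) s_n + K²`. The true order is `n log n`; the cruder `n^{3/2}` is enough. -/
lemma integral_stepSum_sq_le [IsProbabilityMeasure μ] {m : ℕ} (hm : 2 ≤ m) {p : ℝ}
    (hp : p = ((m : ℝ) + 1) / (2 * m)) {i0 : Fin m} {ξ : ℕ → Ω → Fin m}
    (hERW : IsTypeIERW μ m p i0 ξ) {f : Fin m → ℝ} (hf : ∑ i, f i = 0) {K : ℝ}
    (hK : ∀ i, |f i| ≤ K) {n : ℕ} (hn : 1 ≤ n) :
    ∫ ω, stepSum ξ f n ω ^ 2 ∂μ ≤ 2 * K ^ 2 * (n * √n) := by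
  have hsq : ∀ i, f i ^ 2 ≤ K ^ 2 := fun i => sq_le_sq' (by linarith [neg_le_of_abs_le (hK i)])
    (le_of_abs_le (hK i))
  induction n, hn using Nat.le_induction with
  | base =>
    have h1 : ∀ ω, stepSum ξ f 1 ω ^ 2 ≤ K ^ 2 := fun ω => by simpa [stepSum] using hsq _
    have := integral_mono_of_nonneg (μ := μ) (ae_of_all _ fun ω => sq_nonneg (stepSum ξ f 1 ω))
      (integrable_const (K ^ 2)) (ae_of_all _ h1)
    simp at this ⊢
    nlinarith [sq_nonneg K]
  | succ n hn ih =>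
    have hn0 : (0 : ℝ) < n := by exact_mod_cast hn
    have hW := memLp_top_stepSum (μ := μ) hERW.measurable f n
    have hX := memLp_top_step (μ := μ) hERW.measurable f (n + 1)
    have hWW : Integrable (fun ω => stepSum ξ f n ω * stepSum ξ f n ω) μ :=
      (hW.mul (r := ⊤) hW).integrable le_top
    have hWX : Integrable (fun ω => stepSum ξ f n ω * f (ξ (n + 1) ω)) μ :=
      (hX.mul (r := ⊤) hW).integrable le_top
    have hXX : Integrable (fun ω => f (ξ (n + 1) ω) * f (ξ (n + 1) ω)) μ :=
      (hX.mul (r := ⊤) hX).integrable le_top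
    have hcross : ∫ ω, stepSum ξ f n ω * f (ξ (n + 1) ω) ∂μ =
        (∫ ω, stepSum ξ f n ω ^ 2 ∂μ) / (2 * n) := by
      have h := integral_mul_next hm hp hERW f hn (G := fun ω => (stepSum ξ f n ω : ℂ))
        (Complex.measurable_ofReal.comp (measurable_stepSum_stepFiltration ξ f n))
        (C := n * K) (fun ω => by
          rw [Complex.norm_real]
          exact abs_stepSum_le ξ hK n ω)
      simp only [← Complex.ofReal_mul] at h
      rw [integral_complex_ofReal, integral_complex_ofReal, Complex.ofReal_inj] at h
      rw [h, ← integral_div]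
      refine integral_congr_ae (ae_of_all _ fun ω => ?_)
      simp only [hf]
      ring
    have hXXle : ∫ ω, f (ξ (n + 1) ω) * f (ξ (n + 1) ω) ∂μ ≤ K ^ 2 := by
      have := integral_mono (μ := μ) hXX (integrable_const (K ^ 2))
        (fun ω => by simpa [sq] using hsq (ξ (n + 1) ω))
      simpa using this
    have hexp : ∫ ω, stepSum ξ f (n + 1) ω ^ 2 ∂μ =
        (∫ ω, stepSum ξ f n ω ^ 2 ∂μ) * (1 + 1 / n)
          + ∫ ω, f (ξ (n + 1) ω) * f (ξ (n + 1) ω) ∂μ := by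
      have : ∀ ω, stepSum ξ f (n + 1) ω ^ 2 = (stepSum ξ f n ω * stepSum ξ f n ω
          + 2 * (stepSum ξ f n ω * f (ξ (n + 1) ω))) + f (ξ (n + 1) ω) * f (ξ (n + 1) ω) := by
        intro ω; rw [stepSum_succ]; ring
      simp only [this]
      rw [integral_add (hWW.fun_add (hWX.const_mul 2)) hXX, integral_add hWW (hWX.const_mul 2),
        integral_const_mul, hcross]
      simp only [← sq]
      field_simp
    rw [hexp]
    have h1 : (∫ ω, stepSum ξ f n ω ^ 2 ∂μ) * (1 + 1 / n) ≤
        2 * K ^ 2 * (n * √n) * (1 + 1 / n) := by gcongr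
    have h2 : 2 * K ^ 2 * (n * √n) * (1 + 1 / n) = 2 * K ^ 2 * (n * √n + √n) := by field_simp
    have h3 : n * √n + √n + 1 / 2 ≤ ((n + 1 : ℕ) : ℝ) * √((n + 1 : ℕ) : ℝ) := by
      push_cast
      have ha := Real.sq_sqrt hn0.le
      have hb := Real.sq_sqrt (show (0 : ℝ) ≤ n + 1 by positivity)
      have hab : √(n : ℝ) ≤ √((n : ℝ) + 1) := Real.sqrt_le_sqrt (by linarith)
      have ha1 : 1 ≤ √(n : ℝ) := Real.one_le_sqrt.2 (by exact_mod_cast hn)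
      set a := √(n : ℝ)
      set b := √((n : ℝ) + 1)
      have hba : (b - a) * (b + a) = 1 := by nlinarith
      have hbpos : 0 < b + a := by linarith
      have hba' : 1 / 2 ≤ (b - a) * b := by nlinarith
      nlinarith
    nlinarith [sq_nonneg K]

/-! ### One-step recursion for the characteristic function -/

/-- The characteristic function at `t` of `n^{-1/2} ∑_{k=1}^n f (ξ_k)`. -/
def stepChar (μ : Measure Ω) {m : ℕ} (ξ : ℕ → Ω → Fin m) (f : Fin m → ℝ) (t : ℝ) (n : ℕ) : ℂ :=
  ∫ ω, Complex.exp (Complex.I * ((t * (stepSum ξ f n ω / √n) : ℝ) : ℂ)) ∂μ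

lemma norm_exp_I_mul_taylor_le (x : ℝ) :
    ‖Complex.exp (Complex.I * (x : ℂ)) - (1 + Complex.I * x - (x : ℂ) ^ 2 / 2)‖ ≤
      |x| ^ 3 * Real.exp |x| := by
  have h := Complex.norm_exp_sub_sum_le_norm_mul_exp (Complex.I * (x : ℂ)) 3
  have h2 : ∑ k ∈ Finset.range 3, (Complex.I * (x : ℂ)) ^ k / (k.factorial : ℂ) =
      1 + Complex.I * x - (x : ℂ) ^ 2 / 2 := by
    simp [Finset.sum_range_succ, mul_pow, Complex.I_sq]
    ring
  rw [h2] at h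
  simpa using h

/-- The deterministic coefficients produced by changing the normalisation from `√n` to
`√(n+1)`: with `δ = (n+1)^{-1/2} - n^{-1/2}`, the drift coefficient
`δ + (n+1)^{-1/2}/(2n)` is of order `n^{-5/2}`, because `√n` is exactly the growth rate of the
conditional mean at criticality. -/
lemma norm_coeff_bounds {n : ℕ} (hn : 1 ≤ n) :
    |1 / √((n + 1 : ℕ) : ℝ) - 1 / √(n : ℝ)| ≤ 1 / √(n : ℝ) ^ 3 ∧
    |1 / √((n + 1 : ℕ) : ℝ) - 1 / √(n : ℝ) + 1 / √((n + 1 : ℕ) : ℝ) / (2 * n)|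
      ≤ 1 / √(n : ℝ) ^ 5 := by
  have hn0 : (0 : ℝ) < n := by exact_mod_cast hn
  push_cast
  have ha := Real.sq_sqrt hn0.le
  have hb := Real.sq_sqrt (show (0 : ℝ) ≤ n + 1 by positivity)
  have hab : √(n : ℝ) ≤ √((n : ℝ) + 1) := Real.sqrt_le_sqrt (by linarith)
  have ha1 : 1 ≤ √(n : ℝ) := Real.one_le_sqrt.2 (by exact_mod_cast hn)
  set a := √(n : ℝ)
  set b := √((n : ℝ) + 1)
  rw [← ha] at hb ⊢
  have ha0 : 0 < a := by linarith
  have hb0 : 0 < b := by linarith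
  have h1 : 1 / b - 1 / a = -(1 / (a * b * (a + b))) := by
    field_simp
    nlinarith
  have h2 : 1 / b - 1 / a + 1 / b / (2 * a ^ 2) = 1 / (2 * a ^ 2 * b * (a + b) ^ 2) := by
    rw [h1]
    field_simp
    nlinarith
  constructor
  · rw [h1, abs_neg, abs_of_pos (by positivity)]
    have : a ^ 3 ≤ a * b * (a + b) := by
      calc a ^ 3 = a * a * a := by ring
        _ ≤ a * b * (a + b) := by gcongr; linarith
    gcongr
  · rw [h2, abs_of_pos (by positivity)]
    have : a ^ 5 ≤ 2 * a ^ 2 * b * (a + b) ^ 2 := by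
      calc a ^ 5 = 1 * a ^ 2 * a * a ^ 2 := by ring
        _ ≤ 2 * a ^ 2 * b * (a + b) ^ 2 := by gcongr <;> linarith
    gcongr

set_option maxHeartbeats 2000000 in
/-- One step of the characteristic function recursion. Conditioning the second order Taylor
expansion on the past, the drift is negligible, the conditional variance is `s/(n+1)` up to a
fluctuation controlled by the additive functional of `f² - s`, and every error is
`O(|t| n^{-5/4})`. -/
lemma stepChar_succ [IsProbabilityMeasure μ] {m : ℕ} (hm : 2 ≤ m) {p : ℝ}
    (hp : p = ((m : ℝ) + 1) / (2 * m)) {i0 : Fin m} {ξ : ℕ → Ω → Fin m}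
    (hERW : IsTypeIERW μ m p i0 ξ) {f : Fin m → ℝ} (hf : ∑ i, f i = 0) {K : ℝ}
    (hK : ∀ i, |f i| ≤ K) {n : ℕ} (hn : 1 ≤ n) {t : ℝ} (ht : |t| ≤ 1) {s : ℝ}
    (hs : s = (∑ i, f i ^ 2) / m) :
    ‖stepChar μ ξ f t (n + 1) - (1 - t ^ 2 * s / (2 * ((n + 1 : ℕ) : ℝ)) : ℝ) * stepChar μ ξ f t n‖
      ≤ (K + 3 * K ^ 2 + 8 * K ^ 3 * Real.exp (2 * K)) * |t| * (n : ℝ) ^ (-(5 / 4) : ℝ) := by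
  have hm0 : (0 : ℝ) < m := by positivity
  have hn0 : (0 : ℝ) < n := by exact_mod_cast hn
  have hK0 : 0 ≤ K := (abs_nonneg _).trans (hK i0)
  have hξ := hERW.measurable
  obtain ⟨hδ, hdrift⟩ := norm_coeff_bounds hn
  set α : ℝ := 1 / √((n + 1 : ℕ) : ℝ) with hα
  set δ : ℝ := α - 1 / √(n : ℝ) with hδdef
  have ha1 : 1 ≤ √(n : ℝ) := Real.one_le_sqrt.2 (by exact_mod_cast hn)
  have han : √(n : ℝ) ^ 2 = n := Real.sq_sqrt hn0.le
  have hα0 : 0 ≤ α := by positivity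
  have hαa : α ≤ 1 / √(n : ℝ) := by
    rw [hα]
    gcongr
    simp
  have hα2 : α ^ 2 = 1 / ((n + 1 : ℕ) : ℝ) := by
    rw [hα, div_pow, Real.sq_sqrt (by positivity), one_pow]
  set W : Ω → ℝ := stepSum ξ f n with hW
  set X : Ω → ℝ := fun ω => f (ξ (n + 1) ω) with hX
  set V : Ω → ℝ := stepSum ξ (fun i => f i ^ 2 - s) n with hV
  set G : Ω → ℂ := fun ω => Complex.exp (Complex.I * ((t * (W ω / √n) : ℝ) : ℂ)) with hG
  have hGm : Measurable[stepFiltration ξ n] G := by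
    have := measurable_stepSum_stepFiltration ξ f n
    refine Complex.measurable_exp.comp (measurable_const.mul (Complex.measurable_ofReal.comp ?_))
    exact measurable_const.mul (this.div_const _)
  have hGm' : Measurable G := hGm.mono (stepFiltration_le hξ n) le_rfl
  have hGn : ∀ ω, ‖G ω‖ = 1 := fun ω => Complex.norm_exp_I_mul_ofReal _
  have hWm : Measurable[stepFiltration ξ n] fun ω => (W ω : ℂ) :=
    Complex.measurable_ofReal.comp (measurable_stepSum_stepFiltration ξ f n)
  have hWb : ∀ ω, |W ω| ≤ n * K := fun ω => abs_stepSum_le ξ hK n ω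
  have hXb : ∀ ω, |X ω| ≤ K := fun ω => hK _
  have LG : MemLp G ⊤ μ := memLp_top_of_bound hGm'.aestronglyMeasurable 1
    (ae_of_all _ fun ω => (hGn ω).le)
  have LW : MemLp (fun ω => (W ω : ℂ)) ⊤ μ := (memLp_top_stepSum hξ f n).ofReal
  have LX : MemLp (fun ω => (X ω : ℂ)) ⊤ μ := (memLp_top_step hξ f (n + 1)).ofReal
  have LV : MemLp (fun ω => (V ω : ℂ)) ⊤ μ := (memLp_top_stepSum hξ (fun i => f i ^ 2 - s) n).ofReal
  have LGW : MemLp (fun ω => G ω * W ω) ⊤ μ := LW.mul (r := ⊤) LG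
  have LGX : MemLp (fun ω => G ω * X ω) ⊤ μ := LX.mul (r := ⊤) LG
  have LGWW : MemLp (fun ω => G ω * W ω * W ω) ⊤ μ := LW.mul (r := ⊤) LGW
  have LGWX : MemLp (fun ω => G ω * W ω * X ω) ⊤ μ := LX.mul (r := ⊤) LGW
  have LGXX : MemLp (fun ω => G ω * X ω * X ω) ⊤ μ := LX.mul (r := ⊤) LGX
  have LGV : MemLp (fun ω => G ω * V ω) ⊤ μ := LV.mul (r := ⊤) LG
  have iG := LG.integrable le_top
  have iGW := LGW.integrable le_top
  have iGX := LGX.integrable le_top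
  have iGWW := LGWW.integrable le_top
  have iGWX := LGWX.integrable le_top
  have iGXX := LGXX.integrable le_top
  have iGV := LGV.integrable le_top
  -- the three conditional moments entering the expansion
  have e1 : ∫ ω, G ω * X ω ∂μ = (∫ ω, G ω * W ω ∂μ) / (2 * n) := by
    rw [hX, integral_mul_next hm hp hERW f hn hGm (fun ω => (hGn ω).le), ← integral_div]
    refine integral_congr_ae (ae_of_all _ fun ω => ?_)
    simp only [hf, ← hW]
    push_cast
    ring
  have e2 : ∫ ω, G ω * W ω * X ω ∂μ = (∫ ω, G ω * W ω * W ω ∂μ) / (2 * n) := by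
    rw [hX, integral_mul_next (G := fun ω => G ω * W ω) hm hp hERW f hn (hGm.mul hWm) (C := n * K) (fun ω => by
      simpa [hGn] using hWb ω), ← integral_div]
    refine integral_congr_ae (ae_of_all _ fun ω => ?_)
    simp only [hf, ← hW]
    push_cast
    ring
  have e3 : ∫ ω, G ω * X ω * X ω ∂μ =
      s * (∫ ω, G ω ∂μ) + (∫ ω, G ω * V ω ∂μ) / (2 * n) := by
    have h := integral_mul_next hm hp hERW (fun i => f i ^ 2) hn hGm (fun ω => (hGn ω).le)
    have h1 : ∀ ω, G ω * X ω * X ω = G ω * ((f (ξ (n + 1) ω) ^ 2 : ℝ) : ℂ) := by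
      intro ω; simp only [hX]; push_cast; ring
    simp only [h1]
    rw [h, ← integral_div, ← integral_const_mul, ← integral_add (iG.const_mul _) (iGV.div_const _)]
    refine integral_congr_ae (ae_of_all _ fun ω => ?_)
    have h2 : stepSum ξ (fun i => f i ^ 2) n ω / (2 * n) + (∑ i, f i ^ 2) / (2 * m) =
        s + V ω / (2 * n) := by
      have h3 : V ω = stepSum ξ (fun i => f i ^ 2) n ω - n * s := by
        simp [hV, stepSum, Finset.sum_sub_distrib]
      rw [h3, hs]
      field_simp
      ring
    simp only [h2]
    push_cast
    ring
  -- moment bounds for the error terms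
  have b1 : ‖∫ ω, G ω * W ω ∂μ‖ ≤ n * K := by
    refine (norm_integral_le_of_norm_le_const (C := n * K) (ae_of_all _ fun ω => ?_)).trans
      (by simp)
    simpa [hGn] using hWb ω
  have b2 : ‖∫ ω, G ω * W ω * W ω ∂μ‖ ≤ 2 * K ^ 2 * (n * √n) := by
    refine (norm_integral_le_integral_norm _).trans ?_
    refine le_of_eq_of_le ?_ (integral_stepSum_sq_le hm hp hERW hf hK hn)
    refine integral_congr_ae (ae_of_all _ fun ω => ?_)
    simp [hGn, ← hW, sq]
  have hs0 : 0 ≤ s := by rw [hs]; positivity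
  have hsq : ∀ i, f i ^ 2 ≤ K ^ 2 := fun i => sq_le_sq' (by linarith [neg_le_of_abs_le (hK i)])
    (le_of_abs_le (hK i))
  have hsK : s ≤ K ^ 2 := by
    rw [hs, div_le_iff₀ hm0]
    refine (Finset.sum_le_sum fun i _ => hsq i).trans ?_
    simp [mul_comm]
  have b3 : ‖∫ ω, G ω * V ω ∂μ‖ ≤ 2 * K ^ 2 * √(n * √n) := by
    have hVm := memLp_top_stepSum (μ := μ) hξ (fun i => f i ^ 2 - s) n
    have hc : ∑ i, (f i ^ 2 - s) = 0 := by
      rw [Finset.sum_sub_distrib, hs]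
      simp
      field_simp
      simp
    have hKV : ∀ i, |f i ^ 2 - s| ≤ K ^ 2 := fun i => by
      rw [abs_le]
      constructor <;> nlinarith [hsq i, sq_nonneg (f i)]
    have h2 := integral_stepSum_sq_le (f := fun i => f i ^ 2 - s) hm hp hERW hc hKV hn
    have h4 : (∫ ω, |V ω| ∂μ) ^ 2 ≤ ∫ ω, V ω ^ 2 ∂μ := by
      have hv := variance_nonneg (fun ω => |V ω|) μ
      rw [variance_eq_sub (X := fun ω => |V ω|) ((hVm.abs).mono_exponent le_top)] at hv
      simpa using hv
    have h5 : ‖∫ ω, G ω * V ω ∂μ‖ ≤ ∫ ω, |V ω| ∂μ := by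
      refine (norm_integral_le_integral_norm _).trans (le_of_eq ?_)
      refine integral_congr_ae (ae_of_all _ fun ω => ?_)
      simp [hGn]
    refine h5.trans (abs_le_of_sq_le_sq' ?_ (by positivity)).2
    rw [mul_pow, Real.sq_sqrt (by positivity)]
    refine (h4.trans h2).trans ?_
    have : 0 ≤ (K ^ 2) ^ 2 * (n * √n : ℝ) := by positivity
    nlinarith
  -- Taylor remainder
  have hΔ : ∀ ω, |t * (δ * W ω + α * X ω)| ≤ |t| * (2 * K / √n) := by
    intro ω
    rw [abs_mul]
    gcongr
    refine (abs_add_le _ _).trans ?_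
    rw [abs_mul, abs_mul, abs_of_nonneg hα0]
    have h1 : |δ| * |W ω| ≤ 1 / √(n : ℝ) ^ 3 * (n * K) :=
      mul_le_mul hδ (hWb ω) (abs_nonneg _) (by positivity)
    have h2 : α * |X ω| ≤ 1 / √(n : ℝ) * K :=
      mul_le_mul hαa (hXb ω) (abs_nonneg _) (by positivity)
    have h3 : 1 / √(n : ℝ) ^ 3 * (n * K) = 1 / √(n : ℝ) * K := by
      nth_rewrite 2 [← han]
      field_simp
    calc _ ≤ _ := add_le_add h1 h2
      _ = _ := by rw [h3]; ring
  have hR : ∀ ω, ‖Complex.exp (Complex.I * ((t * (stepSum ξ f (n + 1) ω / √((n + 1 : ℕ) : ℝ)) : ℝ) : ℂ))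
      - G ω * (1 + Complex.I * ((t * (δ * W ω + α * X ω) : ℝ) : ℂ)
          - ((t * (δ * W ω + α * X ω) : ℝ) : ℂ) ^ 2 / 2)‖
      ≤ |t| * (8 * K ^ 3 * Real.exp (2 * K)) * (1 / √(n : ℝ) ^ 3) := by
    intro ω
    have h1 : Complex.exp (Complex.I * ((t * (stepSum ξ f (n + 1) ω / √((n + 1 : ℕ) : ℝ)) : ℝ) : ℂ)) =
        G ω * Complex.exp (Complex.I * ((t * (δ * W ω + α * X ω) : ℝ) : ℂ)) := by
      rw [hG, ← Complex.exp_add, ← mul_add, ← Complex.ofReal_add]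
      congr 3
      rw [stepSum_succ, ← hW, hδdef, hα, hX]
      ring
    rw [h1, ← mul_sub, norm_mul, hGn, one_mul]
    refine (norm_exp_I_mul_taylor_le _).trans ?_
    have h2 := hΔ ω
    have h3 : |t| * (2 * K / √n) ≤ 2 * K := by
      have : 2 * K / √(n : ℝ) ≤ 2 * K := div_le_self (by positivity) ha1
      have h0 : 0 ≤ 2 * K / √(n : ℝ) := by positivity
      nlinarith
    have h4 : |t| ^ 3 ≤ |t| := pow_le_of_le_one (abs_nonneg _) ht (by norm_num)
    calc |t * (δ * W ω + α * X ω)| ^ 3 * Real.exp |t * (δ * W ω + α * X ω)|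
        ≤ (|t| * (2 * K / √n)) ^ 3 * Real.exp (2 * K) := by
          gcongr
          exact h2.trans h3
      _ = |t| ^ 3 * (8 * K ^ 3 * Real.exp (2 * K)) * (1 / √(n : ℝ) ^ 3) := by
          field_simp; ring
      _ ≤ _ := by gcongr
  have hmain : stepChar μ ξ f t (n + 1)
      - (1 - t ^ 2 * s / (2 * ((n + 1 : ℕ) : ℝ)) : ℝ) * stepChar μ ξ f t n =
      (∫ ω, (Complex.exp (Complex.I * ((t * (stepSum ξ f (n + 1) ω / √((n + 1 : ℕ) : ℝ)) : ℝ) : ℂ))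
      - G ω * (1 + Complex.I * ((t * (δ * W ω + α * X ω) : ℝ) : ℂ)
          - ((t * (δ * W ω + α * X ω) : ℝ) : ℂ) ^ 2 / 2)) ∂μ)
      + Complex.I * t * ((δ + α / (2 * n) : ℝ) * ∫ ω, G ω * W ω ∂μ)
      - (t ^ 2 / 2 : ℝ) * ((δ ^ 2 + δ * α / n : ℝ) * (∫ ω, G ω * W ω * W ω ∂μ)
        + (α ^ 2 / (2 * n) : ℝ) * ∫ ω, G ω * V ω ∂μ) := by
    have hpoly : ∀ ω, G ω * (1 + Complex.I * ((t * (δ * W ω + α * X ω) : ℝ) : ℂ)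
          - ((t * (δ * W ω + α * X ω) : ℝ) : ℂ) ^ 2 / 2) =
        (((((G ω + (Complex.I * t * δ) * (G ω * W ω)) + (Complex.I * t * α) * (G ω * X ω))
          + (-(t ^ 2 * δ ^ 2 / 2) : ℂ) * (G ω * W ω * W ω))
          + (-(t ^ 2 * δ * α) : ℂ) * (G ω * W ω * X ω))
          + (-(t ^ 2 * α ^ 2 / 2) : ℂ) * (G ω * X ω * X ω)) := by
      intro ω
      push_cast
      ring
    have i1 := iG.fun_add (iGW.const_mul (Complex.I * t * δ))
    have i2 := i1.fun_add (iGX.const_mul (Complex.I * t * α))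
    have i3 := i2.fun_add (iGWW.const_mul (-(t ^ 2 * δ ^ 2 / 2) : ℂ))
    have i4 := i3.fun_add (iGWX.const_mul (-(t ^ 2 * δ * α) : ℂ))
    have i5 := i4.fun_add (iGXX.const_mul (-(t ^ 2 * α ^ 2 / 2) : ℂ))
    have i6 : Integrable (fun ω => Complex.exp (Complex.I *
        ((t * (stepSum ξ f (n + 1) ω / √((n + 1 : ℕ) : ℝ)) : ℝ) : ℂ))) μ := by
      have := measurable_stepSum hξ f (n + 1)
      refine Integrable.of_bound (Measurable.aestronglyMeasurable (by fun_prop)) 1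
        (ae_of_all _ fun ω => (Complex.norm_exp_I_mul_ofReal _).le)
    simp only [hpoly]
    rw [integral_sub i6 i5, integral_add i4 (iGXX.const_mul _), integral_add i3 (iGWX.const_mul _),
      integral_add i2 (iGWW.const_mul _), integral_add i1 (iGX.const_mul _),
      integral_add iG (iGW.const_mul _)]
    simp only [integral_const_mul]
    rw [e1, e2, e3]
    have hGs : stepChar μ ξ f t n = ∫ ω, G ω ∂μ := rfl
    have hα2' : (α : ℂ) ^ 2 = 1 / ((n + 1 : ℕ) : ℂ) := by
      rw [← Complex.ofReal_pow, hα2]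
      push_cast
      rfl
    have hn1 : ((n + 1 : ℕ) : ℂ) ≠ 0 := by exact_mod_cast Nat.succ_ne_zero n
    have hnC : (n : ℂ) ≠ 0 := by exact_mod_cast hn0.ne'
    rw [hGs, stepChar]
    push_cast at hα2' hn1 ⊢
    rw [hα2']
    field_simp
    ring
  rw [hmain]
  have ha3 : 1 / √(n : ℝ) ^ 3 ≤ (n : ℝ) ^ (-(5 / 4) : ℝ) := by
    rw [Real.sqrt_eq_rpow, ← Real.rpow_mul_natCast hn0.le, one_div, ← Real.rpow_neg hn0.le]
    exact Real.rpow_le_rpow_of_exponent_le (by exact_mod_cast hn) (by norm_num)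
  have hV3 : 1 / (n : ℝ) ^ 2 * √(n * √n) = (n : ℝ) ^ (-(5 / 4) : ℝ) := by
    rw [Real.sqrt_eq_rpow, Real.sqrt_eq_rpow, Real.mul_rpow hn0.le (by positivity),
      ← Real.rpow_mul hn0.le, ← Real.rpow_natCast, one_div, ← Real.rpow_neg hn0.le,
      ← Real.rpow_add hn0, ← Real.rpow_add hn0]
    norm_num
  set w := (n : ℝ) ^ (-(5 / 4) : ℝ) with hw
  have hw0 : 0 ≤ w := by positivity
  have ht2 : t ^ 2 ≤ |t| := by
    rw [← sq_abs]
    exact pow_le_of_le_one (abs_nonneg _) ht (by norm_num)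
  have r1 := (norm_integral_le_of_norm_le_const (μ := μ) (ae_of_all _ hR))
  have r2 : ‖Complex.I * t * ((δ + α / (2 * n) : ℝ) * ∫ ω, G ω * W ω ∂μ)‖ ≤ |t| * (K * w) := by
    rw [norm_mul, norm_mul, norm_mul, Complex.norm_I, one_mul, Complex.norm_real, Complex.norm_real]
    simp only [Real.norm_eq_abs]
    refine mul_le_mul_of_nonneg_left ?_ (abs_nonneg t)
    calc _ ≤ 1 / √(n : ℝ) ^ 5 * (n * K) :=
          mul_le_mul hdrift b1 (norm_nonneg _) (by positivity)
      _ = K * (1 / √(n : ℝ) ^ 3) := by nth_rewrite 2 [← han]; field_simp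
      _ ≤ _ := by gcongr
  have r3 : ‖(δ ^ 2 + δ * α / n : ℝ) * (∫ ω, G ω * W ω * W ω ∂μ)‖ ≤ 4 * K ^ 2 * w := by
    rw [norm_mul, Complex.norm_real, Real.norm_eq_abs]
    have h1 : |δ ^ 2 + δ * α / n| ≤ 2 * (1 / √(n : ℝ) ^ 6) := by
      refine (abs_add_le _ _).trans ?_
      rw [abs_div, abs_mul, abs_pow, abs_of_nonneg hα0, abs_of_pos hn0]
      have h2 : |δ| ^ 2 ≤ (1 / √(n : ℝ) ^ 3) ^ 2 := by gcongr
      have h3 : |δ| * α / n ≤ (1 / √(n : ℝ) ^ 3) * (1 / √n) / n := by gcongr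
      have h4 : (1 / √(n : ℝ) ^ 3) ^ 2 = 1 / √(n : ℝ) ^ 6 := by field_simp
      have h5 : (1 / √(n : ℝ) ^ 3) * (1 / √n) / n = 1 / √(n : ℝ) ^ 6 := by
        nth_rewrite 3 [← han]; field_simp
      linarith
    calc _ ≤ 2 * (1 / √(n : ℝ) ^ 6) * (2 * K ^ 2 * (n * √n)) :=
          mul_le_mul h1 b2 (norm_nonneg _) (by positivity)
      _ = 4 * K ^ 2 * (1 / √(n : ℝ) ^ 3) := by nth_rewrite 2 [← han]; field_simp; ring
      _ ≤ _ := by gcongr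
  have r4 : ‖(α ^ 2 / (2 * n) : ℝ) * ∫ ω, G ω * V ω ∂μ‖ ≤ K ^ 2 * w := by
    rw [norm_mul, Complex.norm_real, Real.norm_eq_abs, abs_of_nonneg (by positivity)]
    have h1 : α ^ 2 / (2 * n) ≤ 1 / 2 * (1 / (n : ℝ) ^ 2) := by
      have : α ^ 2 ≤ 1 / n := by
        rw [hα2]; gcongr; simp
      calc _ ≤ 1 / (n : ℝ) / (2 * n) := by gcongr
        _ = _ := by field_simp
    calc _ ≤ 1 / 2 * (1 / (n : ℝ) ^ 2) * (2 * K ^ 2 * √(n * √n)) :=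
          mul_le_mul h1 b3 (norm_nonneg _) (by positivity)
      _ = K ^ 2 * (1 / (n : ℝ) ^ 2 * √(n * √n)) := by ring
      _ = _ := by rw [hV3]
  have r5 : ‖(t ^ 2 / 2 : ℝ) * ((δ ^ 2 + δ * α / n : ℝ) * (∫ ω, G ω * W ω * W ω ∂μ)
        + (α ^ 2 / (2 * n) : ℝ) * ∫ ω, G ω * V ω ∂μ)‖ ≤ |t| / 2 * (5 * K ^ 2 * w) := by
    rw [norm_mul, Complex.norm_real, Real.norm_eq_abs, abs_of_nonneg (by positivity)]
    gcongr
    refine (norm_add_le _ _).trans ?_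
    linarith
  refine (norm_sub_le _ _).trans ?_
  refine (add_le_add (norm_add_le _ _) le_rfl).trans ?_
  have r6 : |t| * (8 * K ^ 3 * Real.exp (2 * K)) * (1 / √(n : ℝ) ^ 3) ≤
      |t| * (8 * K ^ 3 * Real.exp (2 * K)) * w := by gcongr
  simp only [probReal_univ, mul_one] at r1
  have : 0 ≤ |t| * K ^ 2 * w := by positivity
  linarith

/-! ### Iterating the recursion -/

lemma norm_stepChar_le [IsProbabilityMeasure μ] {m : ℕ} (ξ : ℕ → Ω → Fin m) (f : Fin m → ℝ)
    (t : ℝ) (n : ℕ) : ‖stepChar μ ξ f t n‖ ≤ 1 := by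
  refine (norm_integral_le_of_norm_le_const (C := 1) (ae_of_all _ fun ω => ?_)).trans (by simp)
  exact (Complex.norm_exp_I_mul_ofReal _).le

lemma abs_one_sub_sub_exp_neg_le {x : ℝ} (hx : 0 ≤ x) : |1 - x - Real.exp (-x)| ≤ x ^ 2 := by
  have h1 : 1 - x ≤ Real.exp (-x) := by linarith [Real.add_one_le_exp (-x)]
  have h2 : Real.exp (-x) * (1 + x) ≤ 1 := by
    have h3 : Real.exp (-x) * Real.exp x = 1 := by rw [← Real.exp_add]; simp
    nlinarith [Real.add_one_le_exp x, Real.exp_pos (-x)]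
  have h4 : Real.exp (-x) ≤ 1 := Real.exp_le_one_iff.2 (by linarith)
  rw [abs_le]
  constructor <;> nlinarith [Real.exp_pos (-x)]

/-- Iterating the one-step recursion: the characteristic function of the normalised sum is
Gaussian with variance `s (H_n - 1)`, up to an error `O(|t|)` uniform in `n`. -/
lemma exists_norm_stepChar_sub_le [IsProbabilityMeasure μ] {m : ℕ} (hm : 2 ≤ m) {p : ℝ}
    (hp : p = ((m : ℝ) + 1) / (2 * m)) {i0 : Fin m} {ξ : ℕ → Ω → Fin m}
    (hERW : IsTypeIERW μ m p i0 ξ) {f : Fin m → ℝ} (hf : ∑ i, f i = 0) {s : ℝ}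
    (hs : s = (∑ i, f i ^ 2) / m) :
    ∃ C : ℝ, ∀ n : ℕ, 1 ≤ n → ∀ t : ℝ, |t| ≤ 1 →
      ‖stepChar μ ξ f t n - (Real.exp (-(t ^ 2 * s / 2 * ((harmonic n : ℝ) - 1))) : ℝ)‖
        ≤ C * |t| := by
  obtain ⟨K, hK⟩ : ∃ K, ∀ i, |f i| ≤ K :=
    ⟨∑ i, |f i|, fun i => Finset.single_le_sum (f := fun i => |f i|) (fun j _ => abs_nonneg _)
      (Finset.mem_univ i)⟩
  have hs0 : 0 ≤ s := by rw [hs]; positivity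
  have hK0 : 0 ≤ K := (abs_nonneg _).trans (hK i0)
  set C₁ := (K + 3 * K ^ 2 + 8 * K ^ 3 * Real.exp (2 * K)) + s ^ 2 with hC₁
  have hC₁0 : 0 ≤ C₁ := by positivity
  have hsum : Summable fun n : ℕ => (n : ℝ) ^ (-(5 / 4) : ℝ) :=
    Real.summable_nat_rpow.2 (by norm_num)
  have key : ∀ n : ℕ, 1 ≤ n → ∀ t : ℝ, |t| ≤ 1 →
      ‖stepChar μ ξ f t n - (Real.exp (-(t ^ 2 * s / 2 * ((harmonic n : ℝ) - 1))) : ℝ)‖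
        ≤ K * |t| + C₁ * |t| * ∑ k ∈ Finset.range n, (k : ℝ) ^ (-(5 / 4) : ℝ) := by
    intro n hn t ht
    induction n, hn using Nat.le_induction with
    | base =>
      have h1 : ‖stepChar μ ξ f t 1 - 1‖ ≤ K * |t| := by
        have hint : Integrable (fun ω => Complex.exp (Complex.I *
            ((t * (stepSum ξ f 1 ω / √((1 : ℕ) : ℝ)) : ℝ) : ℂ))) μ := by
          have := measurable_stepSum hERW.measurable f 1
          exact Integrable.of_bound (Measurable.aestronglyMeasurable (by fun_prop)) 1
            (ae_of_all _ fun ω => (Complex.norm_exp_I_mul_ofReal _).le)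
        have h2 : stepChar μ ξ f t 1 - 1 = ∫ ω, (Complex.exp (Complex.I *
            ((t * (stepSum ξ f 1 ω / √((1 : ℕ) : ℝ)) : ℝ) : ℂ)) - 1) ∂μ := by
          rw [integral_sub hint (integrable_const _), stepChar]
          simp
        rw [h2]
        refine (norm_integral_le_of_norm_le_const (C := K * |t|)
          (ae_of_all _ fun ω => ?_)).trans (by simp)
        refine Real.norm_exp_I_mul_ofReal_sub_one_le.trans ?_
        rw [Real.norm_eq_abs, abs_mul, mul_comm]
        gcongr
        simpa [stepSum] using hK _
      simpa [harmonic] using h1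
    | succ n hn ih =>
      have hn0 : (0 : ℝ) < n := by exact_mod_cast hn
      have hstep := stepChar_succ hm hp hERW hf hK hn ht hs
      set x := t ^ 2 * s / (2 * ((n + 1 : ℕ) : ℝ)) with hx
      have hx0 : 0 ≤ x := by positivity
      set E := Real.exp (-(t ^ 2 * s / 2 * ((harmonic n : ℝ) - 1))) with hE
      have hE' : Real.exp (-(t ^ 2 * s / 2 * ((harmonic (n + 1) : ℝ) - 1))) =
          Real.exp (-x) * E := by
        rw [hE, ← Real.exp_add, harmonic_succ, hx]
        congr 1
        push_cast
        field_simp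
        ring
      set w := (n : ℝ) ^ (-(5 / 4) : ℝ) with hw
      have hxw : x ^ 2 ≤ s ^ 2 * |t| * w := by
        have ht4 : t ^ 4 ≤ |t| := by
          have : t ^ 4 = |t| ^ 4 := by rw [← abs_pow, abs_of_nonneg (by positivity)]
          rw [this]
          exact pow_le_of_le_one (abs_nonneg _) ht (by norm_num)
        have hnw : 1 / (n : ℝ) ^ 2 ≤ w := by
          rw [hw, ← Real.rpow_natCast, one_div, ← Real.rpow_neg hn0.le]
          exact Real.rpow_le_rpow_of_exponent_le (by exact_mod_cast hn) (by norm_num)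
        have h1 : x ≤ t ^ 2 * s / n := by
          rw [hx]
          gcongr
          push_cast
          linarith
        calc x ^ 2 ≤ (t ^ 2 * s / n) ^ 2 := by gcongr
          _ = s ^ 2 * t ^ 4 * (1 / (n : ℝ) ^ 2) := by ring
          _ ≤ _ := by gcongr
      have hsplit : stepChar μ ξ f t (n + 1) - ((Real.exp (-x) * E : ℝ) : ℂ) =
          (stepChar μ ξ f t (n + 1) - ((1 - x : ℝ) : ℂ) * stepChar μ ξ f t n)
          + ((1 - x - Real.exp (-x) : ℝ) : ℂ) * stepChar μ ξ f t n
          + ((Real.exp (-x) : ℝ) : ℂ) * (stepChar μ ξ f t n - (E : ℝ)) := by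
        push_cast
        ring
      have h2 : ‖((1 - x - Real.exp (-x) : ℝ) : ℂ) * stepChar μ ξ f t n‖ ≤ x ^ 2 := by
        rw [norm_mul, Complex.norm_real, Real.norm_eq_abs]
        calc _ ≤ x ^ 2 * 1 := mul_le_mul (abs_one_sub_sub_exp_neg_le hx0)
              (norm_stepChar_le ξ f t n) (norm_nonneg _) (by positivity)
          _ = _ := mul_one _
      have h3 : ‖((Real.exp (-x) : ℝ) : ℂ) * (stepChar μ ξ f t n - (E : ℝ))‖ ≤
          ‖stepChar μ ξ f t n - (E : ℝ)‖ := by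
        rw [norm_mul, Complex.norm_real, Real.norm_eq_abs, abs_of_pos (Real.exp_pos _)]
        exact mul_le_of_le_one_left (norm_nonneg _) (Real.exp_le_one_iff.2 (by linarith))
      rw [hE', hsplit, Finset.sum_range_succ]
      refine (norm_add_le _ _).trans ((add_le_add (norm_add_le _ _) le_rfl).trans ?_)
      have : C₁ * |t| * (∑ k ∈ Finset.range n, (k : ℝ) ^ (-(5 / 4) : ℝ) + w) =
          C₁ * |t| * ∑ k ∈ Finset.range n, (k : ℝ) ^ (-(5 / 4) : ℝ)
          + (K + 3 * K ^ 2 + 8 * K ^ 3 * Real.exp (2 * K)) * |t| * w + s ^ 2 * |t| * w := by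
        rw [hC₁]; ring
      rw [this]
      linarith
  refine ⟨K + C₁ * ∑' n : ℕ, (n : ℝ) ^ (-(5 / 4) : ℝ), fun n hn t ht => (key n hn t ht).trans ?_⟩
  have := hsum.sum_le_tsum (Finset.range n) (fun k _ => by positivity)
  have h2 : C₁ * |t| * ∑ k ∈ Finset.range n, (k : ℝ) ^ (-(5 / 4) : ℝ) ≤
      C₁ * |t| * ∑' n : ℕ, (n : ℝ) ^ (-(5 / 4) : ℝ) := by gcongr
  linarith

/-! ### The one-dimensional limit -/

lemma tendsto_log_natCast_atTop : Tendsto (fun n : ℕ => Real.log n) atTop atTop :=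
  Real.tendsto_log_atTop.comp tendsto_natCast_atTop_atTop

lemma tendsto_harmonic_two_mul_div_log :
    Tendsto (fun n : ℕ => ((harmonic (2 * n) : ℝ) - 1) / Real.log n) atTop (𝓝 1) := by
  have h2 : Tendsto (fun n : ℕ => 2 * n) atTop atTop :=
    tendsto_id.const_mul_atTop' (by norm_num)
  have h3 := ((Real.tendsto_harmonic_sub_log.comp h2).add_const (Real.log 2 - 1)).div_atTop
    tendsto_log_natCast_atTop
  have h4 := h3.add_const 1
  rw [zero_add] at h4
  refine h4.congr' ?_
  filter_upwards [eventually_ge_atTop 2] with n hn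
  have hn1 : (1 : ℝ) < n := by exact_mod_cast hn
  have hl := Real.log_pos hn1
  simp only [Function.comp]
  push_cast
  rw [Real.log_mul (by norm_num) (by linarith)]
  field_simp
  ring

/-- The one-dimensional critical central limit theorem, at the level of characteristic
functions. -/
lemma tendsto_integral_exp_stepSum [IsProbabilityMeasure μ] {m : ℕ} (hm : 2 ≤ m) {p : ℝ}
    (hp : p = ((m : ℝ) + 1) / (2 * m)) {i0 : Fin m} {ξ : ℕ → Ω → Fin m}
    (hERW : IsTypeIERW μ m p i0 ξ) {f : Fin m → ℝ} (hf : ∑ i, f i = 0) :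
    Tendsto (fun n : ℕ => ∫ ω, Complex.exp
        (((√((n : ℝ) * Real.log n))⁻¹ * stepSum ξ f (2 * n) ω : ℝ) * Complex.I) ∂μ)
      atTop (𝓝 ((Real.exp (-((∑ i, f i ^ 2) / m)) : ℝ) : ℂ)) := by
  set s := (∑ i, f i ^ 2) / (m : ℝ) with hs
  obtain ⟨C, hC⟩ := exists_norm_stepChar_sub_le hm hp hERW hf hs
  -- this choice of `t` satisfies `t / √(2n) = 1 / √(n log n)`
  set t : ℕ → ℝ := fun n => √(2 / Real.log n) with ht
  have ht0 : Tendsto t atTop (𝓝 0) := by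
    have := (tendsto_const_nhds (x := (2 : ℝ))).div_atTop tendsto_log_natCast_atTop
    have h := (Real.continuous_sqrt.tendsto 0).comp this
    rw [Real.sqrt_zero] at h
    exact h
  have htabs : Tendsto (fun n => |t n|) atTop (𝓝 0) := by simpa using ht0.abs
  have hE : Tendsto (fun n : ℕ => ((Real.exp (-((t n) ^ 2 * s / 2 *
      ((harmonic (2 * n) : ℝ) - 1))) : ℝ) : ℂ)) atTop (𝓝 ((Real.exp (-s) : ℝ) : ℂ)) := by
    have h1 := ((tendsto_harmonic_two_mul_div_log.const_mul s).neg).rexp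
    rw [mul_one] at h1
    refine (Complex.continuous_ofReal.tendsto _).comp (h1.congr' ?_)
    filter_upwards [eventually_ge_atTop 2] with n hn
    have hl : 0 < Real.log n := Real.log_pos (by exact_mod_cast hn)
    rw [ht, Real.sq_sqrt (by positivity)]
    congr 2
    field_simp
  have hdiff : Tendsto (fun n : ℕ => stepChar μ ξ f (t n) (2 * n) - ((Real.exp (-((t n) ^ 2 * s / 2 *
      ((harmonic (2 * n) : ℝ) - 1))) : ℝ) : ℂ)) atTop (𝓝 0) := by
    refine squeeze_zero_norm' ?_ (by simpa using htabs.const_mul C)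
    filter_upwards [eventually_ge_atTop 1, htabs.eventually (ge_mem_nhds zero_lt_one)] with n hn h1
    exact hC (2 * n) (by omega) (t n) h1
  have hlim := hdiff.add hE
  simp only [sub_add_cancel, zero_add] at hlim
  refine hlim.congr' ?_
  filter_upwards [eventually_ge_atTop 2] with n hn
  have hn1 : (1 : ℝ) < n := by exact_mod_cast hn
  have hl : 0 < Real.log n := Real.log_pos hn1
  rw [stepChar]
  refine integral_congr_ae (ae_of_all _ fun ω => ?_)
  have h1 : t n * (stepSum ξ f (2 * n) ω / √((2 * n : ℕ) : ℝ)) =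
      (√((n : ℝ) * Real.log n))⁻¹ * stepSum ξ f (2 * n) ω := by
    have h2 : (√((n : ℝ) * Real.log n))⁻¹ = √(2 / Real.log n) / √((2 * n : ℕ) : ℝ) := by
      rw [← Real.sqrt_inv, ← Real.sqrt_div (by positivity)]
      congr 1
      push_cast
      field_simp
    rw [h2]
    ring
  simp only [h1]
  rw [mul_comm]

end

/-! ### The multivariate limit -/

/-- `2 Σ(U)` as a quadratic form: `⟨l, 2 Σ(U) l⟩` is twice the uniform mean of `⟨l, u_i - ū⟩²`. -/
lemma dotProduct_two_smul_cov {d m : ℕ} (u : Fin m → Fin d → ℝ) (ub : Fin d → ℝ)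
    (l : Fin d → ℝ) :
    l ⬝ᵥ ((2 : ℝ) • ((m : ℝ)⁻¹ • ∑ i, Matrix.vecMulVec (u i - ub) (u i - ub))) *ᵥ l =
      2 * ((∑ i, (l ⬝ᵥ (u i - ub)) ^ 2) / m) := by
  simp only [Matrix.smul_mulVec, Matrix.sum_mulVec, dotProduct_smul, dotProduct_sum,
    Matrix.vecMulVec_mulVec, smul_eq_mul]
  rw [div_eq_inv_mul]
  congr 2
  refine Finset.sum_congr rfl fun i _ => ?_
  rw [sq, dotProduct_comm (u i - ub) l]
  simp

/-- **CLT in the critical regime for the Type-I ERW** (one-dimensional marginal):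
if `p = p_c^m = (m+1)/(2m)`, then `(S_{2n} - 2n ū)/√(n log n)` converges in distribution
to the centered Gaussian on `ℝ^d` with covariance `2 Σ(U)`. -/
theorem typeI_ERW_critical_clt
    {Ω : Type*} [MeasurableSpace Ω] (μ : Measure Ω) [IsProbabilityMeasure μ]
    (d m : ℕ) (hm : 2 ≤ m) (u : Fin m → Fin d → ℝ) (hu : Function.Injective u)
    (p : ℝ) (hp : p = ((m : ℝ) + 1) / (2 * m))
    (i0 : Fin m) (ξ : ℕ → Ω → Fin m) (hERW : IsTypeIERW μ m p i0 ξ)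
    (ub : Fin d → ℝ) (hub : ub = (m : ℝ)⁻¹ • ∑ i, u i)
    (SigmaU : Matrix (Fin d) (Fin d) ℝ)
    (hSigmaU : SigmaU = (m : ℝ)⁻¹ • ∑ i, Matrix.vecMulVec (u i - ub) (u i - ub)) :
    ∃ ν : Measure (Fin d → ℝ), IsCenteredGaussianCov ν ((2 : ℝ) • SigmaU) ∧
      ∀ f : BoundedContinuousFunction (Fin d → ℝ) ℝ,
        Tendsto (fun n : ℕ => ∫ ω, f ((Real.sqrt ((n : ℝ) * Real.log n))⁻¹ •
            (∑ k ∈ Finset.Icc 1 (2 * n), u (ξ k ω) - (2 * (n : ℝ)) • ub)) ∂μ)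
          atTop (𝓝 (∫ x, f x ∂ν)) := by
  have hm0 : (m : ℝ) ≠ 0 := by norm_cast; omega
  have hquad : ∀ l : Fin d → ℝ, l ⬝ᵥ ((2 : ℝ) • SigmaU) *ᵥ l =
      2 * ((∑ i, (l ⬝ᵥ (u i - ub)) ^ 2) / m) := fun l => by
    rw [hSigmaU, dotProduct_two_smul_cov]
  have hpsd : ((2 : ℝ) • SigmaU).PosSemidef := by
    refine Matrix.PosSemidef.of_dotProduct_mulVec_nonneg ?_ fun x => ?_
    · rw [hSigmaU, Matrix.IsHermitian, Matrix.conjTranspose_eq_transpose_of_trivial]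
      simp [Matrix.transpose_sum]
    · rw [star_trivial, hquad]
      positivity
  set γ : Measure (EuclideanSpace ℝ (Fin d)) := multivariateGaussian 0 ((2 : ℝ) • SigmaU) with hγ
  -- the Gaussian and the Lévy theorem live on `EuclideanSpace`; `ofLp` transports them to `Fin d → ℝ`
  have hofLp : Measurable (WithLp.ofLp : EuclideanSpace ℝ (Fin d) → Fin d → ℝ) := by fun_prop
  have hchar : ∀ l : EuclideanSpace ℝ (Fin d), charFun γ l =
      Complex.exp (-((l.ofLp ⬝ᵥ ((2 : ℝ) • SigmaU) *ᵥ l.ofLp : ℝ) : ℂ) / 2) := fun l => by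
    rw [hγ, charFun_multivariateGaussian hpsd]
    simp [neg_div]
  obtain ⟨Z, hZ⟩ : ∃ Z : ℕ → Ω → Fin d → ℝ, ∀ n ω, Z n ω =
      (Real.sqrt ((n : ℝ) * Real.log n))⁻¹ •
        (∑ k ∈ Finset.Icc 1 (2 * n), u (ξ k ω) - (2 * (n : ℝ)) • ub) := ⟨_, fun _ _ => rfl⟩
  simp only [← hZ]
  have hZm : ∀ n, Measurable (Z n) := fun n => by
    have h1 : Measurable fun ω => ∑ k ∈ Finset.Icc 1 (2 * n), u (ξ k ω) :=
      Finset.measurable_fun_sum _ fun k _ =>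
        (measurable_from_top (f := u)).comp (hERW.measurable k)
    rw [funext (hZ n)]
    exact (h1.sub_const _).const_smul (√((n : ℝ) * Real.log n))⁻¹
  have hZm' : ∀ n, Measurable fun ω => WithLp.toLp 2 (Z n ω) := fun n => by
    have := hZm n
    fun_prop
  refine ⟨γ.map WithLp.ofLp, ⟨Measure.isProbabilityMeasure_map hofLp.aemeasurable, fun l => ?_⟩,
    fun f => ?_⟩
  · have hlm : Measurable fun x : Fin d → ℝ => l ⬝ᵥ x := by
      unfold dotProduct
      fun_prop
    rw [Measure.map_map hlm hofLp]
    have := Measure.isProbabilityMeasure_map (μ := γ) (hlm.comp hofLp).aemeasurable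
    refine Measure.ext_of_charFun ?_
    funext r
    have h1 : charFun (γ.map ((fun x : Fin d → ℝ => l ⬝ᵥ x) ∘ WithLp.ofLp)) r =
        charFun γ (WithLp.toLp 2 (r • l)) := by
      rw [charFun_apply, charFun_apply, integral_map (hlm.comp hofLp).aemeasurable
        (Measurable.aestronglyMeasurable (by fun_prop))]
      refine integral_congr_ae (ae_of_all _ fun x => ?_)
      simp only [Function.comp, RCLike.inner_apply, conj_trivial, PiLp.inner_apply, dotProduct,
        Finset.mul_sum, Pi.smul_apply, smul_eq_mul]
      congr 3
      exact Finset.sum_congr rfl fun i _ => by ring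
    rw [h1, hchar, charFun_gaussianReal]
    have h2 : 0 ≤ l ⬝ᵥ ((2 : ℝ) • SigmaU) *ᵥ l := by rw [hquad]; positivity
    rw [Real.coe_toNNReal _ h2]
    congr 1
    simp only [Matrix.mulVec_smul, smul_dotProduct, dotProduct_smul, smul_eq_mul]
    push_cast
    ring
  · let P : ℕ → ProbabilityMeasure (EuclideanSpace ℝ (Fin d)) := fun n =>
      ⟨μ.map fun ω => WithLp.toLp 2 (Z n ω),
        Measure.isProbabilityMeasure_map (hZm' n).aemeasurable⟩
    let P₀ : ProbabilityMeasure (EuclideanSpace ℝ (Fin d)) := ⟨γ, inferInstance⟩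
    have hconv : Tendsto P atTop (𝓝 P₀) := by
      refine ProbabilityMeasure.tendsto_of_tendsto_charFun fun l => ?_
      set g : Fin m → ℝ := fun i => l.ofLp ⬝ᵥ (u i - ub) with hg
      have hg0 : ∑ i, g i = 0 := by
        simp only [hg, ← dotProduct_sum, Finset.sum_sub_distrib, hub]
        simp [← Nat.cast_smul_eq_nsmul ℝ, smul_smul, hm0]
      have h1 := tendsto_integral_exp_stepSum hm hp hERW hg0
      have h2 : charFun (P₀ : Measure (EuclideanSpace ℝ (Fin d))) l =
          ((Real.exp (-((∑ i, g i ^ 2) / m)) : ℝ) : ℂ) := by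
        change charFun γ l = _
        rw [hchar, hquad]
        push_cast
        congr 1
        ring
      rw [h2]
      refine h1.congr fun n => ?_
      change _ = charFun (μ.map fun ω => WithLp.toLp 2 (Z n ω)) l
      rw [charFun_apply, integral_map (hZm' n).aemeasurable
        (Measurable.aestronglyMeasurable (by fun_prop))]
      refine integral_congr_ae (ae_of_all _ fun ω => ?_)
      have h3 : stepSum ξ g (2 * n) ω =
          l.ofLp ⬝ᵥ (∑ k ∈ Finset.Icc 1 (2 * n), u (ξ k ω) - (2 * (n : ℝ)) • ub) := by
        simp only [stepSum, hg, ← dotProduct_sum, Finset.sum_sub_distrib]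
        simp [← Nat.cast_smul_eq_nsmul ℝ]
      beta_reduce
      rw [h3, ← smul_eq_mul (√((n : ℝ) * Real.log n))⁻¹, ← dotProduct_smul, ← hZ]
      simp [PiLp.inner_apply, dotProduct]
    have h := (ProbabilityMeasure.tendsto_iff_forall_integral_tendsto.1 hconv)
      (f.compContinuous ⟨WithLp.ofLp, by fun_prop⟩)
    have hlim : ∫ x, f x ∂(γ.map WithLp.ofLp) = ∫ x : EuclideanSpace ℝ (Fin d), f x.ofLp ∂γ :=
      integral_map hofLp.aemeasurable f.continuous.aestronglyMeasurable
    rw [hlim]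
    refine h.congr fun n => ?_
    change ∫ x, f (WithLp.ofLp x) ∂(μ.map fun ω => WithLp.toLp 2 (Z n ω)) = _
    rw [integral_map (hZm' n).aemeasurable]
    exact (f.continuous.comp (by fun_prop)).aestronglyMeasurable
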